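/- arXiv:cs/0207030 — 9 statements merged into one kernel-verified Lean document; each statement's English description precedes it below -/
import Mathlib

section
/- A collective argumentation theory is negative if and only if it satisfies Importation: whenever Γ ↝ Δ ∪ Φ, also Γ ∪ Δ ↝ Φ. -/
/-- Monotonicity: the defining condition of a collective argumentation theory. -/
def Mono {A : Type*} (att : Set A → Set A → Prop) : Prop :=
  ∀ Γ Δ Γ' Δ' : Set A, att Γ Δ → att (Γ ∪ Γ') (Δ ∪ Δ')

/-- A collective argumentation theory is negative if Γ ↝ Γ ∪ Δ always implies Γ ↝ Δ. -/
def Negative {A : Type*} (att : Set A → Set A → Prop) : Prop :=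
  ∀ Γ Δ : Set A, att Γ (Γ ∪ Δ) → att Γ Δ

theorem negative_iff_importation {A : Type*} (att : Set A → Set A → Prop)
    (hmono : Mono att) :
    Negative att ↔ ∀ Γ Δ Φ : Set A, att Γ (Δ ∪ Φ) → att (Γ ∪ Δ) Φ := by
  constructor
  · intro hneg Γ Δ Φ h
    apply hneg
    have h2 := hmono Γ (Δ ∪ Φ) Δ Γ h
    have e : Δ ∪ Φ ∪ Γ = Γ ∪ Δ ∪ Φ := by
      rw [Set.union_comm, Set.union_assoc]
    rwa [e] at h2
  · intro himp Γ Δ h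
    have h2 := himp Γ Γ Δ h
    rwa [Set.union_self] at h2
end

section
/- A collective argumentation theory is positive if and only if it satisfies Exportation: whenever Γ ∪ Δ ↝ Φ, also Γ ↝ Δ ∪ Φ. -/
/-- A collective argumentation theory is positive if Γ ∪ Δ ↝ Δ always implies Γ ↝ Δ. -/
def Positive {A : Type*} (att : Set A → Set A → Prop) : Prop :=
  ∀ Γ Δ : Set A, att (Γ ∪ Δ) Δ → att Γ Δ

theorem positive_iff_exportation {A : Type*} (att : Set A → Set A → Prop)
    (hmono : Mono att) :
    Positive att ↔ ∀ Γ Δ Φ : Set A, att (Γ ∪ Δ) Φ → att Γ (Δ ∪ Φ) := by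
  constructor
  · intro hp Γ Δ Φ h
    apply hp
    have h2 := hmono _ _ Φ Δ h
    rwa [Set.union_assoc, Set.union_comm Φ Δ] at h2
  · intro he Γ Δ h
    have h2 := he Γ Δ Δ h
    rwa [Set.union_self] at h2
end

section
/- If Γ is a negatively admissible set of arguments and Δ is a conflict-free set with Γ ⊆ Δ, then Δ is also negatively admissible. -/
/-- Γ negatively attacks Δ (Γ ↝⁻ Δ) if Γ ↝ Γ ∪ Δ. -/
def NegAtt {A : Type*} (att : Set A → Set A → Prop) (Γ Δ : Set A) : Prop :=
  att Γ (Γ ∪ Δ)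

/-- Γ is conflict-free if it does not attack itself. -/
def ConflictFree {A : Type*} (att : Set A → Set A → Prop) (Γ : Set A) : Prop :=
  ¬ att Γ Γ

/-- Γ is negatively admissible if it is conflict-free and it negatively
counterattacks any set that negatively attacks it. -/
def NegAdmissible {A : Type*} (att : Set A → Set A → Prop) (Γ : Set A) : Prop :=
  ConflictFree att Γ ∧ ∀ Δ : Set A, NegAtt att Δ Γ → NegAtt att Γ Δ

theorem negAdmissible_of_superset {A : Type*} (att : Set A → Set A → Prop)
    (hmono : Mono att) (Γ Δ : Set A)
    (hΓ : NegAdmissible att Γ) (hΔcf : ConflictFree att Δ) (hsub : Γ ⊆ Δ) :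
    NegAdmissible att Δ := by
  refine ⟨hΔcf, fun Φ h => ?_⟩
  have h1 : NegAtt att (Φ ∪ Δ) Γ := by
    have h2 := hmono _ _ Δ Γ h
    unfold NegAtt
    exact h2
  have h3 := hmono _ _ Δ ∅ (hΓ.2 _ h1)
  have e1 : Γ ∪ Δ = Δ := Set.union_eq_self_of_subset_left hsub
  have e2 : Γ ∪ (Φ ∪ Δ) ∪ ∅ = Δ ∪ Φ := by
    rw [Set.union_empty, Set.union_left_comm, e1, Set.union_comm]
  rw [e1, e2] at h3
  exact h3
end

section
/- The stable sets of a collective argumentation theory coincide with its maximal negatively admissible sets: Γ is stable if and only if Γ is negatively admissible and no set properly containing Γ is negatively admissible. -/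
/-- Γ is stable if Γ is a maximal element of ⟨Γ⟩ = {Δ | ¬ att Γ Δ}. -/
def Stable {A : Type*} (att : Set A → Set A → Prop) (Γ : Set A) : Prop :=
  ¬ att Γ Γ ∧ ∀ Δ : Set A, Γ ⊂ Δ → att Γ Δ

theorem stable_iff_maximal_negAdmissible {A : Type*} (att : Set A → Set A → Prop)
    (hmono : Mono att) (Γ : Set A) :
    Stable att Γ ↔
      NegAdmissible att Γ ∧ ∀ Δ : Set A, Γ ⊂ Δ → ¬ NegAdmissible att Δ := by
  have mono : ∀ {X Y X' Y' : Set A}, att X Y → X ⊆ X' → Y ⊆ Y' → att X' Y' := by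
    intro X Y X' Y' h h1 h2
    have h3 := hmono X Y X' Y' h
    rwa [Set.union_eq_self_of_subset_left h1, Set.union_eq_self_of_subset_left h2] at h3
  constructor
  · rintro ⟨hcf, hst⟩
    refine ⟨⟨hcf, ?_⟩, ?_⟩
    · intro Δ h
      by_cases hs : Δ ⊆ Γ
      · exact absurd (mono h hs (Set.union_subset hs subset_rfl)) hcf
      · exact hst _ ⟨Set.subset_union_left, fun h' => hs (Set.subset_union_right.trans h')⟩
    · intro Δ hΔ hadm
      exact hadm.1 (mono (hst Δ hΔ) hΔ.1 subset_rfl)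
  · rintro ⟨⟨hcf, hadm⟩, hmax⟩
    refine ⟨hcf, ?_⟩
    intro Δ hΔ
    by_contra hn
    refine hmax Δ hΔ ⟨?_, ?_⟩
    · intro h
      exact hn (mono (hadm Δ (mono h subset_rfl Set.subset_union_left)) subset_rfl
        (Set.union_subset hΔ.1 subset_rfl))
    · intro Φ h
      have h1 : NegAtt att (Φ ∪ Δ) Γ := mono h Set.subset_union_left Set.subset_union_left
      exact mono (hadm _ h1) hΔ.1 (Set.union_subset (hΔ.1.trans Set.subset_union_left)
        (Set.union_subset Set.subset_union_right Set.subset_union_left))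
end

section
/- If a collective argumentation theory is both positive and negative, then its attack relation on single arguments is symmetric: {α} ↝ {β} always implies {β} ↝ {α}. -/
theorem positive_negative_symmetric {A : Type*} (att : Set A → Set A → Prop)
    (hmono : Mono att) (hpos : Positive att) (hneg : Negative att)
    (α β : A) (h : att {α} {β}) : att {β} {α} := by
  have h1 : att ({α} ∪ {β}) ({β} ∪ {α}) := hmono _ _ _ _ h
  have h2 : att ∅ ({β} ∪ {α}) := by
    apply hpos
    rw [Set.empty_union]
    rwa [Set.union_comm {α} {β}] at h1
  have h3 := hmono _ _ {β} ∅ h2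
  rw [Set.empty_union, Set.union_empty] at h3
  exact hneg _ _ h3
end

section
/- The positive attack relation ↝⁺ derived from a collective argumentation theory ↝ is itself a collective argumentation theory (it satisfies Monotonicity), it extends ↝ (Γ ↝ Δ implies Γ ↝⁺ Δ), and it is positive; moreover it is the least such extension: for any positive collective argumentation theory ⇒ with Γ ↝ Δ implying Γ ⇒ Δ, Γ ↝⁺ Δ implies Γ ⇒ Δ. -/
/-- Γ positively attacks Δ (Γ ↝⁺ Δ) if Γ ∪ Δ ↝ Δ. -/
def PosAtt {A : Type*} (att : Set A → Set A → Prop) (Γ Δ : Set A) : Prop :=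
  att (Γ ∪ Δ) Δ

theorem posAtt_least_positive_extension {A : Type*} (att : Set A → Set A → Prop)
    (hmono : Mono att) :
    Mono (PosAtt att) ∧
    (∀ Γ Δ : Set A, att Γ Δ → PosAtt att Γ Δ) ∧
    Positive (PosAtt att) ∧
    (∀ att' : Set A → Set A → Prop, Mono att' → Positive att' →
      (∀ Γ Δ : Set A, att Γ Δ → att' Γ Δ) →
      ∀ Γ Δ : Set A, PosAtt att Γ Δ → att' Γ Δ) := by
  refine ⟨?_, ?_, ?_, ?_⟩
  · intro Γ Δ Γ' Δ' h
    have h2 := hmono _ _ (Γ' ∪ Δ') Δ' h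
    unfold PosAtt
    rwa [Set.union_union_union_comm] at h2
  · intro Γ Δ h
    have h2 := hmono _ _ Δ ∅ h
    rwa [Set.union_empty] at h2
  · intro Γ Δ h
    unfold PosAtt at *
    rwa [Set.union_assoc, Set.union_self] at h
  · intro att' _ hp he Γ Δ h
    exact hp _ _ (he _ _ h)
end

section
/- In a negative collective argumentation theory: (1) a set of arguments is admissible if and only if it is negatively admissible, and (2) every conflict-free set of arguments is positively admissible. -/
/-- A conflict-free Γ is admissible if it counterattacks any set attacking it. -/
def Admissible {A : Type*} (att : Set A → Set A → Prop) (Γ : Set A) : Prop :=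
  ConflictFree att Γ ∧ ∀ Δ : Set A, att Δ Γ → att Γ Δ

/-- A conflict-free Γ is positively admissible if it positively counterattacks
any set positively attacking it. -/
def PosAdmissible {A : Type*} (att : Set A → Set A → Prop) (Γ : Set A) : Prop :=
  ConflictFree att Γ ∧ ∀ Δ : Set A, PosAtt att Δ Γ → PosAtt att Γ Δ

theorem negative_admissibility {A : Type*} (att : Set A → Set A → Prop)
    (hmono : Mono att) (hneg : Negative att) :
    (∀ Γ : Set A, Admissible att Γ ↔ NegAdmissible att Γ) ∧
    (∀ Γ : Set A, ConflictFree att Γ → PosAdmissible att Γ) := by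
  have key : ∀ Γ Δ : Set A, NegAtt att Γ Δ ↔ att Γ Δ := by
    intro Γ Δ
    refine ⟨hneg Γ Δ, fun h => ?_⟩
    have h2 := hmono Γ Δ ∅ Γ h
    rw [Set.union_empty, Set.union_comm Δ Γ] at h2
    exact h2
  refine ⟨fun Γ => ?_, fun Γ hc => ⟨hc, fun Δ h => ?_⟩⟩
  · simp only [Admissible, NegAdmissible, key]
  · have h2 := hmono (Δ ∪ Γ) Γ ∅ Δ h
    rw [Set.union_empty, Set.union_comm Δ Γ] at h2
    apply hneg (Γ ∪ Δ) Δ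
    rw [Set.union_assoc, Set.union_self]
    exact h2
end

section
/- A collective argumentation theory is l-positive if and only if it is the positive closure of some local collective argumentation theory, i.e., a relation ⇒ satisfying Monotonicity is positive and semi-local if and only if there exists a local collective argumentation theory ↝ such that Γ ⇒ Δ holds exactly when Γ ∪ Δ ↝ Δ. -/
/-- A collective argumentation theory is local if Γ ↝ Δ ∪ Δ' implies Γ ↝ Δ or Γ ↝ Δ'. -/
def Local {A : Type*} (att : Set A → Set A → Prop) : Prop :=
  ∀ Γ Δ Δ' : Set A, att Γ (Δ ∪ Δ') → att Γ Δ ∨ att Γ Δ'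

/-- Semi-locality: Γ ↝ Δ ∪ Φ implies Γ ∪ Δ ↝ Φ or Γ ∪ Φ ↝ Δ. -/
def SemiLocal {A : Type*} (att : Set A → Set A → Prop) : Prop :=
  ∀ Γ Δ Φ : Set A, att Γ (Δ ∪ Φ) → att (Γ ∪ Δ) Φ ∨ att (Γ ∪ Φ) Δ

theorem lpositive_iff_positive_closure_of_local {A : Type*}
    (R : Set A → Set A → Prop) (hmono : Mono R) :
    (Positive R ∧ SemiLocal R) ↔
      ∃ att : Set A → Set A → Prop, Mono att ∧ Local att ∧
        ∀ Γ Δ : Set A, R Γ Δ ↔ att (Γ ∪ Δ) Δ := by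
  have mono : ∀ (S : Set A → Set A → Prop), Mono S → ∀ {Γ Δ Γ' Δ' : Set A},
      Γ ⊆ Γ' → Δ ⊆ Δ' → S Γ Δ → S Γ' Δ' := by
    intro S hS Γ Δ Γ' Δ' h1 h2 h
    have := hS Γ Δ Γ' Δ' h
    rwa [Set.union_eq_self_of_subset_left h1, Set.union_eq_self_of_subset_left h2] at this
  constructor
  · rintro ⟨hp, hs⟩
    refine ⟨fun Γ Δ => R Γ (Γ ∩ Δ), ?_, ?_, ?_⟩
    · intro Γ Δ Γ' Δ' h
      exact mono R hmono Set.subset_union_left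
        (Set.inter_subset_inter Set.subset_union_left Set.subset_union_left) h
    · intro Γ Δ Δ' h
      have h' : R Γ (Γ ∩ Δ ∪ Γ ∩ Δ') := by
        rw [← Set.inter_union_distrib_left]; exact h
      rcases hs _ _ _ h' with h | h
      · right
        exact mono R hmono (Set.union_subset subset_rfl Set.inter_subset_left) subset_rfl h
      · left
        exact mono R hmono (Set.union_subset subset_rfl Set.inter_subset_left) subset_rfl h
    · intro Γ Δ
      constructor
      · intro h
        exact mono R hmono Set.subset_union_left
          (Set.subset_inter Set.subset_union_right subset_rfl) h
      · intro h
        exact hp _ _ (mono R hmono subset_rfl Set.inter_subset_right h)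
  · rintro ⟨att, hm, hl, he⟩
    refine ⟨?_, ?_⟩
    · intro Γ Δ h
      rw [he] at h ⊢
      exact mono att hm (by simp) subset_rfl h
    · intro Γ Δ Φ h
      rw [he] at h
      rw [he, he]
      rcases hl _ _ _ h with h | h
      · right
        exact mono att hm (by intro x; simp only [Set.mem_union]; tauto) subset_rfl h
      · left
        exact mono att hm (by intro x; simp only [Set.mem_union]; tauto) subset_rfl h
end

section
/- In a normal collective argumentation theory, a set of arguments Γ is stable if and only if Γ = {α | ¬(Γ ↝ {α})}. -/
/-- Compactness: an attack holds only if it holds between finite subsets. -/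
def Compact {A : Type*} (att : Set A → Set A → Prop) : Prop :=
  ∀ Γ Δ : Set A, att Γ Δ →
    ∃ Γ' ⊆ Γ, ∃ Δ' ⊆ Δ, Γ'.Finite ∧ Δ'.Finite ∧ att Γ' Δ'

/-- A collective argumentation theory is affirmative if no set attacks the empty set. -/
def Affirmative {A : Type*} (att : Set A → Set A → Prop) : Prop :=
  ∀ Γ : Set A, ¬ att Γ (∅ : Set A)

theorem att_mono_aux {A : Type*} {att : Set A → Set A → Prop} (hmono : Mono att)
    {Γ Γ' Δ Δ' : Set A} (h1 : Γ ⊆ Γ') (h2 : Δ ⊆ Δ') (h : att Γ Δ) : att Γ' Δ' := by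
  have := hmono Γ Δ Γ' Δ' h
  rwa [Set.union_eq_self_of_subset_left h1, Set.union_eq_self_of_subset_left h2] at this

theorem att_single_aux {A : Type*} {att : Set A → Set A → Prop} (hmono : Mono att)
    (haff : Affirmative att) (hloc : Local att) (hcomp : Compact att) {Γ Δ : Set A}
    (h : att Γ Δ) : ∃ a ∈ Δ, att Γ {a} := by
  obtain ⟨Γ', hΓ, Δ', hΔ, -, hf, h'⟩ := hcomp Γ Δ h
  have h2 : att Γ Δ' := att_mono_aux hmono hΓ (le_refl _) h'
  have key : att Γ Δ' → ∃ a ∈ Δ', att Γ {a} := by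
    clear h2 h' hΔ
    induction Δ', hf using Set.Finite.induction_on with
    | empty => exact fun h => absurd h (haff Γ)
    | @insert a s _ _ ih =>
      intro h
      rw [Set.insert_eq] at h
      rcases hloc _ _ _ h with h | h
      · exact ⟨a, Set.mem_insert _ _, h⟩
      · obtain ⟨b, hb, hb'⟩ := ih h
        exact ⟨b, Set.mem_insert_of_mem _ hb, hb'⟩
  obtain ⟨a, ha, h3⟩ := key h2
  exact ⟨a, hΔ ha, h3⟩

theorem normal_stable_iff {A : Type*} (att : Set A → Set A → Prop)
    (hmono : Mono att) (haff : Affirmative att) (hloc : Local att)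
    (hcomp : Compact att) (Γ : Set A) :
    Stable att Γ ↔ Γ = {α : A | ¬ att Γ {α}} := by
  constructor
  · rintro ⟨h1, h2⟩
    ext a
    constructor
    · intro ha h
      exact h1 (att_mono_aux hmono (le_refl _) (Set.singleton_subset_iff.2 ha) h)
    · intro ha
      by_contra hn
      have h := h2 (insert a Γ) (Set.ssubset_insert hn)
      rw [Set.insert_eq] at h
      rcases hloc _ _ _ h with h | h
      · exact ha h
      · exact h1 h
  · intro h
    have hm : ∀ a, a ∈ Γ ↔ ¬ att Γ {a} := fun a => Set.ext_iff.1 h a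
    refine ⟨fun hs => ?_, fun Δ hΔ => ?_⟩
    · obtain ⟨a, ha, h3⟩ := att_single_aux hmono haff hloc hcomp hs
      exact (hm a).1 ha h3
    · obtain ⟨a, ha, hn⟩ := Set.exists_of_ssubset hΔ
      have : att Γ {a} := by
        by_contra hc
        exact hn ((hm a).2 hc)
      exact att_mono_aux hmono (le_refl _) (Set.singleton_subset_iff.2 ha) this
end
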